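/- For every n ≥ 2 and every integer r ≥ 1, the set 𝔄_r := {λ ∈ ℝ^n : λ_1 ≥ … ≥ λ_n, λ_1+…+λ_n = 0, and 0 ∈ C_r(O_λ)} is a convex cone: it contains 0, is closed under addition, and is closed under multiplication by nonnegative real scalars. -/

import Mathlib

/-- The `r`-th partial convex hull of a set `X`: the union of the convex hulls of all
`r`-tuples of points of `X`. -/
def partialConvexHull {E : Type*} [AddCommGroup E] [Module ℝ E]
    (r : ℕ) (X : Set E) : Set E :=
  {y | ∃ f : Fin r → E, (∀ i, f i ∈ X) ∧ y ∈ convexHull ℝ (Set.range f)}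

/-- The coadjoint orbit `O_λ` of `SU(n)`: the set of `n × n` complex Hermitian matrices
of trace zero whose eigenvalues, listed with multiplicity, are the entries of `lam`. -/
def coadjointOrbit {n : ℕ} (lam : Fin n → ℝ) : Set (Matrix (Fin n) (Fin n) ℂ) :=
  {A | A.trace = 0 ∧ ∃ hA : A.IsHermitian, ∃ σ : Equiv.Perm (Fin n),
      ∀ i, hA.eigenvalues (σ i) = lam i}

/-!
Rotating a member of `O_λ` changes only its flag of eigenspaces, so `0` is a convex combination of
`r` members of `O_λ` precisely when suitable flags in `ℂ^n` form a tight frame with weights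
`w i * (λ j - λ (j + 1))`, once a scalar is added to make these nonnegative. Following Klyachko,
tight frames are traded for semistability, a linear condition on the weights. A tight frame is
semistable, and conversely the Kempf–Ness functional of a semistable system of flags is bounded
below on the positive definite forms; transporting the flags along a minimizing sequence and passing
to a limit of flags gives a critical point, which is a tight frame.

Semistability is additive in the weights for fixed flags, so it remains to find one system of flags
semistable for both `λ` and `μ`. Take the pencil joining the two given systems at a parameter
transcendental over the field generated by their entries: field automorphisms carry its ranks to a
dense set of parameters, and a compactness argument extends the resulting inequality to all others.

The same additivity, applied to the cyclic translates of the weights `w`, makes them all equal.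
-/

open Matrix
open scoped ComplexOrder MatrixOrder Topology

section FieldAutomorphisms

variable {K L : Type*} [Field K] [Field L] [Algebra K L]

theorem exists_isTranscendenceBasis_mem {x : L} (hx : Transcendental K x) :
    ∃ s : Set L, x ∈ s ∧ IsTranscendenceBasis K ((↑) : s → L) := by
  have hind : AlgebraicIndepOn K id ({x} : Set L) :=
    algebraicIndependent_unique_type_iff.2 hx
  obtain ⟨s, hxs, hs⟩ := exists_isTranscendenceBasis_superset hind
  exact ⟨s, hxs rfl, hs⟩

theorem exists_algEquiv_apply_eq [IsAlgClosed L] {x y : L} (hx : Transcendental K x)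
    (hy : Transcendental K y) : ∃ σ : L ≃ₐ[K] L, σ x = y := by
  classical
  obtain ⟨s, hxs, hs⟩ := exists_isTranscendenceBasis_mem hx
  obtain ⟨t, hyt, ht⟩ := exists_isTranscendenceBasis_mem hy
  obtain ⟨e₀⟩ := Cardinal.eq.1 (hs.cardinalMk_eq ht)
  let e : s ≃ t := e₀.trans (Equiv.swap (e₀ ⟨x, hxs⟩) ⟨y, hyt⟩)
  have := IsAlgClosed.isAlgClosure_of_transcendence_basis _ hs
  have := IsAlgClosed.isAlgClosure_of_transcendence_basis _ ht
  let f : Algebra.adjoin K (Set.range ((↑) : s → L)) ≃ₐ[K]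
      Algebra.adjoin K (Set.range ((↑) : t → L)) :=
    hs.1.aevalEquiv.symm.trans ((MvPolynomial.renameEquiv K e).trans ht.1.aevalEquiv)
  let σ : L ≃+* L := IsAlgClosure.equivOfEquiv L L f.toRingEquiv
  have hσ (a) : σ (algebraMap _ L a) = algebraMap _ L (f a) :=
    IsAlgClosure.equivOfEquiv_algebraMap L L f.toRingEquiv a
  refine ⟨AlgEquiv.ofRingEquiv (f := σ) fun a => ?_, ?_⟩
  · have := hσ (algebraMap K _ a)
    rwa [f.commutes] at this
  · change σ x = y
    have := hσ (hs.1.aevalEquiv (MvPolynomial.X ⟨x, hxs⟩))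
    simpa [f, e, AlgebraicIndependent.algebraMap_aevalEquiv] using this

theorem exists_dense_orbit_algEquiv (K : Subfield ℂ) [Countable K] :
    ∃ z : ℂ, Dense (MulAction.orbit (ℂ ≃ₐ[K] ℂ) z) := by
  have hdense : Dense {w : ℂ | IsAlgebraic K w}ᶜ := (Algebraic.countable K ℂ).dense_compl ℝ
  obtain ⟨z, hz⟩ := hdense.nonempty
  refine ⟨z, hdense.mono fun w hw => ?_⟩
  obtain ⟨σ, hσ⟩ := exists_algEquiv_apply_eq (K := K) hz hw
  exact ⟨σ, hσ⟩

end FieldAutomorphisms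

section Rank

variable {K K' : Type*} [Field K] [Field K'] {k m : Type*} [Fintype m]

theorem exists_eq_mul_of_rank (A : Matrix k m K) :
    ∃ (B : Matrix k (Fin A.rank) K) (C : Matrix (Fin A.rank) m K), A = B * C := by
  classical
  let b := Module.finBasis K (LinearMap.range A.mulVecLin)
  let col (j : m) : LinearMap.range A.mulVecLin :=
    ⟨A.mulVecLin (Pi.single j 1), LinearMap.mem_range_self _ _⟩
  refine ⟨.of fun i x => (b x : k → K) i, .of fun x j => b.repr (col j) x, ?_⟩
  ext i j
  have hcol := congrArg (fun v : LinearMap.range A.mulVecLin => (v : k → K) i)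
    (b.sum_repr (col j))
  simp only [Submodule.coe_sum, Submodule.coe_smul, Finset.sum_apply, Pi.smul_apply,
    smul_eq_mul] at hcol
  have hA : (col j : k → K) i = A i j := by simp [col]
  simp only [mul_apply, of_apply, ← hA, ← hcol]
  exact Finset.sum_congr rfl fun x _ => mul_comm _ _

theorem rank_map_ringHom_le (A : Matrix k m K) (σ : K →+* K') : (A.map σ).rank ≤ A.rank := by
  obtain ⟨B, C, hBC⟩ := exists_eq_mul_of_rank A
  calc (A.map σ).rank = (B.map σ * C.map σ).rank := by rw [← Matrix.map_mul, ← hBC]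
    _ ≤ (B.map σ).rank := rank_mul_le_left _ _
    _ ≤ A.rank := by simpa using rank_le_card_width (B.map σ)

theorem isClosed_setOf_matrix_rank_le {𝕜 : Type*} [RCLike 𝕜] [Finite k] (ρ : ℕ) :
    IsClosed {A : Matrix k m 𝕜 | A.rank ≤ ρ} := by
  classical
  have := Fintype.ofFinite k
  let toCLM : Matrix k m 𝕜 →ₗ[𝕜] (m → 𝕜) →L[𝕜] (k → 𝕜) :=
    LinearMap.toContinuousLinearMap.toLinearMap ∘ₗ (toLin' (R := 𝕜)).toLinearMap
  have hopen := (isOpen_setOfPred_nat_le_rank (𝕜 := 𝕜) (E := m → 𝕜) (F := k → 𝕜) (ρ + 1)).preimage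
    toCLM.continuous_of_finiteDimensional
  convert hopen.isClosed_compl using 1
  ext A
  have hrank : LinearMap.rank (toCLM A : (m → 𝕜) →ₗ[𝕜] (k → 𝕜)) = (A.rank : Cardinal) := by
    rw [Matrix.rank, Module.finrank_eq_rank]
    rfl
  simp only [Set.mem_ofPred_eq, Set.mem_compl_iff, Set.mem_preimage, hrank, Nat.cast_le]
  omega

end Rank

section Hermitian

variable {m k : Type*} [Fintype m]

theorem conjTranspose_mul_mul_le [Finite k] {A B : Matrix m m ℂ} (h : A ≤ B) (N : Matrix m k ℂ) :
    Nᴴ * A * N ≤ Nᴴ * B * N := by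
  rw [Matrix.le_iff] at h ⊢
  simpa only [Matrix.mul_sub, Matrix.sub_mul] using h.conjTranspose_mul_mul_same N

variable [DecidableEq m]

theorem exists_unitary_conj_diagonal {A : Matrix m m ℂ} (hA : A.IsHermitian)
    (σ : Equiv.Perm m) :
    ∃ U ∈ unitaryGroup m ℂ, A = U * diagonal (fun i => (hA.eigenvalues (σ i) : ℂ)) * Uᴴ := by
  let U := hA.eigenvectorUnitary
  let D : Matrix m m ℂ := diagonal fun i => hA.eigenvalues i
  have hA' : A = (U : Matrix m m ℂ) * D * (U : Matrix m m ℂ)ᴴ := by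
    conv_lhs => rw [hA.spectral_theorem, Unitary.conjStarAlgAut_apply]
    rfl
  refine ⟨(U : Matrix m m ℂ).submatrix id σ, mem_unitaryGroup_iff.2 ?_, ?_⟩
  · rw [star_eq_conjTranspose, conjTranspose_submatrix, submatrix_mul_equiv]
    exact congrArg (·.submatrix id id) (Unitary.coe_mul_star_self U)
  · have hdiag : diagonal (fun i => (hA.eigenvalues (σ i) : ℂ)) = D.submatrix σ σ :=
      (submatrix_diagonal_equiv (fun i => (hA.eigenvalues i : ℂ)) σ).symm
    rw [hdiag, conjTranspose_submatrix, submatrix_mul_equiv, submatrix_mul_equiv, submatrix_id_id]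
    exact hA'

theorem posDef_iff_exists_conjTranspose_mul_self {A : Matrix m m ℂ} :
    A.PosDef ↔ ∃ L : Matrix m m ℂ, IsUnit L ∧ A = Lᴴ * L := by
  rw [← isStrictlyPositive_iff_posDef, CStarAlgebra.isStrictlyPositive_iff_eq_star_mul_self]
  rfl

theorem trace_re_le_rank {A : Matrix m m ℂ} (hA : A.IsHermitian) (h : A ≤ 1) :
    A.trace.re ≤ A.rank := by
  have heig (i : m) : hA.eigenvalues i ≤ 1 := by
    rw [← map_one (algebraMap ℝ _), le_algebraMap_iff_spectrum_le hA] at h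
    exact h _ (hA.spectrum_real_eq_range_eigenvalues ▸ ⟨i, rfl⟩)
  rw [hA.rank_eq_card_non_zero_eigs, hA.trace_eq_sum_eigenvalues, Fintype.card_subtype,
    Finset.card_filter]
  push_cast
  rw [Complex.re_sum]
  refine Finset.sum_le_sum fun i _ => ?_
  split_ifs with hi
  · exact heig i
  · exact (not_not.1 hi).le

end Hermitian

section Isometry

variable {m k : Type*} [Fintype k]

theorem norm_apply_le_one_of_mul_conjTranspose_eq_one [DecidableEq m] {T : Matrix m k ℂ}
    (hT : T * Tᴴ = 1) (i : m) (j : k) : ‖T i j‖ ≤ 1 := by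
  have hrow : ∑ x, Complex.normSq (T i x) = 1 := by
    have hii := congrFun₂ hT i i
    simp only [mul_apply, conjTranspose_apply, one_apply_eq, RCLike.star_def,
      Complex.mul_conj] at hii
    exact_mod_cast hii
  have hij : ‖T i j‖ ^ 2 ≤ 1 := by
    rw [← Complex.normSq_eq_norm_sq, ← hrow]
    exact Finset.single_le_sum (f := fun x => Complex.normSq (T i x))
      (fun x _ => Complex.normSq_nonneg _) (Finset.mem_univ j)
  exact (sq_le_one_iff₀ (norm_nonneg _)).1 hij

theorem isCompact_setOf_mul_conjTranspose_eq_one [DecidableEq m] :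
    IsCompact {T : Matrix m k ℂ | T * Tᴴ = 1} := by
  have hbox : IsCompact {T : Matrix m k ℂ | ∀ i j, T i j ∈ Metric.closedBall (0 : ℂ) 1} :=
    isCompact_pi_infinite fun _ => isCompact_pi_infinite fun _ => isCompact_closedBall _ _
  refine hbox.of_isClosed_subset (isClosed_eq (by fun_prop) continuous_const) fun T hT i j => ?_
  exact mem_closedBall_zero_iff.2 (norm_apply_le_one_of_mul_conjTranspose_eq_one hT i j)

theorem exists_mul_conjTranspose_eq_one [Fintype m] [DecidableEq m] {T : Matrix m k ℂ}
    {S : Matrix k m ℂ} (h : T * S = 1) :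
    ∃ L : Matrix m m ℂ, (L * T) * (L * T)ᴴ = 1 := by
  have hpos : (T * Tᴴ).PosDef := .mul_conjTranspose_self T fun v w hvw => by
    simpa only [vecMul_vecMul, h, vecMul_one] using congrArg (· ᵥ* S) hvw
  obtain ⟨L, hL, hTL⟩ := posDef_iff_exists_conjTranspose_mul_self.1 hpos
  have hLH : IsUnit (Lᴴ).det := (isUnit_iff_isUnit_det _).1 hL.star
  refine ⟨(Lᴴ)⁻¹, ?_⟩
  calc Lᴴ⁻¹ * T * (Lᴴ⁻¹ * T)ᴴ = Lᴴ⁻¹ * (T * Tᴴ) * L⁻¹ := by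
        simp only [conjTranspose_mul, conjTranspose_nonsing_inv, conjTranspose_conjTranspose,
          Matrix.mul_assoc]
    _ = (Lᴴ⁻¹ * Lᴴ) * (L * L⁻¹) := by simp only [hTL, Matrix.mul_assoc]
    _ = 1 := by
        rw [nonsing_inv_mul _ hLH, mul_nonsing_inv _ ((isUnit_iff_isUnit_det _).1 hL), one_mul]

theorem compactSpace_unitaryGroup [DecidableEq k] : CompactSpace (unitaryGroup k ℂ) := by
  have h : (unitaryGroup k ℂ : Set (Matrix k k ℂ)) = {U | U * Uᴴ = 1} :=
    Set.ext fun _ => mem_unitaryGroup_iff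
  exact isCompact_iff_compactSpace.1 (h ▸ isCompact_setOf_mul_conjTranspose_eq_one)

theorem exists_unitary_mul_upper {n : ℕ} (A : Matrix (Fin n) (Fin n) ℂ) :
    ∃ U ∈ unitaryGroup (Fin n) ℂ, ∃ R : Matrix (Fin n) (Fin n) ℂ,
      R.IsUpperTriangular ∧ A = U * R := by
  let col : Fin n → EuclideanSpace ℂ (Fin n) := fun j => WithLp.toLp 2 fun i => A i j
  have hdim : Module.finrank ℂ (EuclideanSpace ℂ (Fin n)) = Fintype.card (Fin n) := by simp
  let b := InnerProductSpace.gramSchmidtOrthonormalBasis hdim col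
  refine ⟨.of fun i j => b j i, mem_unitaryGroup_iff'.2 ?_, .of fun i j => b.repr (col j) i,
    fun i j hij => InnerProductSpace.gramSchmidtOrthonormalBasis_inv_triangular' hdim col hij, ?_⟩
  · ext i j
    have hb := b.inner_eq_ite i j
    rw [EuclideanSpace.inner_eq_star_dotProduct] at hb
    rw [one_apply, ← hb]
    simp [star_eq_conjTranspose, mul_apply, dotProduct, mul_comm]
  · ext i j
    have hcol := congrArg (fun v : EuclideanSpace ℂ (Fin n) => v i) (b.sum_repr (col j))
    rw [show A i j = col j i from rfl, ← hcol]
    simp [mul_apply, mul_comm]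

end Isometry

section LogDet

variable {m k : Type*} [Fintype m] [DecidableEq m]

/-- The logarithm of the determinant of a positive definite matrix; junk for other matrices. -/
noncomputable def logDet (A : Matrix m m ℂ) : ℝ := Real.log A.det.re

theorem logDet_diagonal {d : m → ℝ} (hd : ∀ i, 0 < d i) :
    logDet (diagonal fun i => (d i : ℂ)) = ∑ i, Real.log (d i) := by
  rw [logDet, det_diagonal, ← Complex.ofReal_prod, Complex.ofReal_re,
    Real.log_prod fun i _ => (hd i).ne']

theorem logDet_one : logDet (1 : Matrix m m ℂ) = 0 := by simp [logDet]

theorem logDet_conjTranspose_mul_mul {A : Matrix m m ℂ} (hA : A.PosDef) {R : Matrix m m ℂ}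
    (hR : IsUnit R) : logDet (Rᴴ * A * R) = Real.log (Complex.normSq R.det) + logDet A := by
  have hdet : (Rᴴ * A * R).det = (Complex.normSq R.det : ℂ) * A.det := by
    rw [det_mul, det_mul, det_conjTranspose, ← Complex.mul_conj, RCLike.star_def]
    ring
  have hR' : R.det ≠ 0 := ((isUnit_iff_isUnit_det R).1 hR).ne_zero
  rw [logDet, hdet, Complex.re_ofReal_mul, logDet, Real.log_mul (by simpa using hR')]
  exact (Complex.pos_iff.1 hA.det_pos).1.ne'

theorem logDet_unitary_conj {A : Matrix m m ℂ} (hA : A.PosDef) {U : Matrix m m ℂ}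
    (hU : U ∈ unitaryGroup m ℂ) : logDet (U * A * Uᴴ) = logDet A := by
  have hUH : Uᴴ ∈ unitaryGroup m ℂ := Unitary.star_mem hU
  have hnorm : Complex.normSq (Uᴴ).det = 1 := by
    have := Unitary.mul_star_self_of_mem (det_of_mem_unitary hUH)
    rw [RCLike.star_def, Complex.mul_conj] at this
    exact_mod_cast this
  have hconj := logDet_conjTranspose_mul_mul hA (Unitary.isUnit_coe (U := ⟨Uᴴ, hUH⟩))
  rwa [conjTranspose_conjTranspose, hnorm, Real.log_one, zero_add] at hconj

theorem logDet_le_trace_sub_card {A : Matrix m m ℂ} (hA : A.PosDef) :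
    logDet A ≤ A.trace.re - Fintype.card m := by
  have hdet : A.det = ((∏ i, hA.1.eigenvalues i : ℝ) : ℂ) := by
    rw [hA.1.det_eq_prod_eigenvalues, Complex.ofReal_prod]
    rfl
  have hcard : (Fintype.card m : ℝ) = ∑ _i : m, (1 : ℝ) := by simp
  rw [logDet, hdet, Complex.ofReal_re, Real.log_prod fun i _ => (hA.eigenvalues_pos i).ne',
    hA.1.trace_eq_sum_eigenvalues, Complex.re_sum, hcard, ← Finset.sum_sub_distrib]
  exact Finset.sum_le_sum fun i _ => Real.log_le_sub_one_of_pos (hA.eigenvalues_pos i)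

theorem logDet_mono {A B : Matrix m m ℂ} (hA : A.PosDef) (hAB : A ≤ B) :
    logDet A ≤ logDet B := by
  have hB : B.PosDef := by simpa using hA.add_posSemidef (Matrix.le_iff.1 hAB)
  obtain ⟨L, hL, rfl⟩ := posDef_iff_exists_conjTranspose_mul_self.1 hB
  have hLdet := (isUnit_iff_isUnit_det L).1 hL
  set C := (L⁻¹)ᴴ * A * L⁻¹ with hC_def
  have hC : C.PosDef :=
    hA.conjTranspose_mul_mul_same (mulVec_injective_of_isUnit (isUnit_nonsing_inv_iff.2 hL))
  have hC_le : C ≤ 1 := calc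
    C ≤ (L⁻¹)ᴴ * (Lᴴ * L) * L⁻¹ := conjTranspose_mul_mul_le hAB L⁻¹
    _ = (L * L⁻¹)ᴴ * (L * L⁻¹) := by simp only [conjTranspose_mul, Matrix.mul_assoc]
    _ = 1 := by rw [mul_nonsing_inv _ hLdet, conjTranspose_one, one_mul]
  have hlog : logDet C ≤ 0 := by
    have htrace : 0 ≤ (1 - C).trace.re := (Complex.nonneg_iff.1 hC_le.trace_nonneg).1
    rw [trace_sub, trace_one, Complex.sub_re, Complex.natCast_re] at htrace
    linarith [logDet_le_trace_sub_card hC]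
  have hA_eq : A = Lᴴ * C * L := by
    rw [hC_def, conjTranspose_nonsing_inv]
    simp only [Matrix.mul_assoc]
    rw [nonsing_inv_mul _ hLdet, ← Matrix.mul_assoc, mul_nonsing_inv _ ?_, one_mul, Matrix.mul_one]
    exact (isUnit_iff_isUnit_det _).1 hL.star
  have hLL : Lᴴ * L = Lᴴ * 1 * L := by rw [Matrix.mul_one]
  rw [hA_eq, hLL, logDet_conjTranspose_mul_mul hC hL, logDet_conjTranspose_mul_mul .one hL,
    logDet_one]
  linarith

-- Cauchy–Binet writes the determinant on the right as a sum over the maximal minors of `N`; one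
-- term is kept by shrinking the diagonal matrix to the rows in the range of `e`.
theorem log_normSq_minor_add_le_logDet [Fintype k] [DecidableEq k] {N : Matrix m k ℂ} {d : m → ℝ}
    (hd : ∀ i, 0 < d i) (e : k ↪ m) (hN : IsUnit (N.submatrix e id)) :
    Real.log (Complex.normSq (N.submatrix e id).det) + ∑ x, Real.log (d (e x)) ≤
      logDet (Nᴴ * diagonal (fun i => (d i : ℂ)) * N) := by
  set D : Matrix m m ℂ := diagonal fun i => (d i : ℂ)
  set D' : Matrix k k ℂ := diagonal fun x => (d (e x) : ℂ)
  let E : Matrix k m ℂ := (1 : Matrix m m ℂ).submatrix e id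
  have hD' : D'.PosDef := .diagonal fun x => by simpa using hd (e x)
  have hE : Eᴴ * D' * E ≤ D := by
    have hdiff : D - Eᴴ * D' * E =
        diagonal fun i => ((if i ∈ Set.range e then 0 else d i : ℝ) : ℂ) := by
      ext i j
      simp only [D, D', E, Matrix.sub_apply, mul_apply, one_apply, diagonal_apply,
        conjTranspose_apply, submatrix_apply, id]
      by_cases hi : i ∈ Set.range e
      · obtain ⟨x, rfl⟩ := hi
        rw [Finset.sum_eq_single x] <;> simp +contextual [eq_comm]
      · have hne (x : k) : e x ≠ i := fun h => hi ⟨x, h⟩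
        rw [Finset.sum_eq_zero] <;> simp [hne]
    rw [Matrix.le_iff, hdiff, posSemidef_diagonal_iff]
    intro i
    split_ifs
    · simp
    · exact_mod_cast (hd i).le
  have hEN : E * N = N.submatrix e id := by
    ext x j
    simp [E, mul_apply, one_apply]
  have hle := conjTranspose_mul_mul_le hE N
  rw [show Nᴴ * (Eᴴ * D' * E) * N = (E * N)ᴴ * D' * (E * N) by
    simp only [conjTranspose_mul, Matrix.mul_assoc], hEN] at hle
  rw [← logDet_diagonal fun x => hd (e x), ← logDet_conjTranspose_mul_mul hD' hN]
  exact logDet_mono (hD'.conjTranspose_mul_mul_same (mulVec_injective_of_isUnit hN)) hle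

end LogDet

section Frames

variable {ι m : Type*} [Fintype ι] [Fintype m] {κ : ι → Type*}
  [∀ a, Fintype (κ a)]

/-- A tight fusion frame: isometries `V a` whose range projections, weighted by `c a`,
sum to the scalar matrix `s`. -/
structure IsTightFrame [DecidableEq m] [∀ a, DecidableEq (κ a)] (c : ι → ℝ) (s : ℝ)
    (V : ∀ a, Matrix m (κ a) ℂ) : Prop where
  isometry (a : ι) : (V a)ᴴ * V a = 1
  sum_eq : ∑ a, (c a : ℂ) • (V a * (V a)ᴴ) = (s : ℂ) • 1

/-- Semistability of the column spaces of the `V a` with respect to the weights `c` and the slope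
`s`, tested on quotients of `ℂ^m`, which are represented by matrices with orthonormal rows. -/
def IsSemistable (c : ι → ℝ) (s : ℝ) (V : ∀ a, Matrix m (κ a) ℂ) : Prop :=
  ∀ (k : ℕ) (T : Matrix (Fin k) m ℂ), T * Tᴴ = 1 → s * k ≤ ∑ a, c a * (T * V a).rank

theorem IsSemistable.add {c c' : ι → ℝ} {s s' : ℝ} {V : ∀ a, Matrix m (κ a) ℂ}
    (h : IsSemistable c s V) (h' : IsSemistable c' s' V) :
    IsSemistable (c + c') (s + s') V := fun k T hT => by
  simpa only [Pi.add_apply, add_mul, Finset.sum_add_distrib] using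
    add_le_add (h k T hT) (h' k T hT)

variable [DecidableEq m]

theorem mul_conjTranspose_self_le_one {k : Type*} [Fintype k] [DecidableEq k]
    {V : Matrix m k ℂ} (hV : Vᴴ * V = 1) : V * Vᴴ ≤ 1 := by
  have hproj : 1 - V * Vᴴ = (1 - V * Vᴴ)ᴴ * (1 - V * Vᴴ) := by
    have hidem : V * Vᴴ * (V * Vᴴ) = V * Vᴴ := by
      rw [Matrix.mul_assoc, ← Matrix.mul_assoc Vᴴ, hV, Matrix.one_mul]
    simp only [conjTranspose_sub, conjTranspose_one, conjTranspose_mul, conjTranspose_conjTranspose,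
      Matrix.mul_sub, Matrix.sub_mul, Matrix.one_mul, Matrix.mul_one, hidem, sub_self, sub_zero]
  rw [Matrix.le_iff, hproj]
  exact posSemidef_conjTranspose_mul_self _

variable [∀ a, DecidableEq (κ a)] {c : ι → ℝ} {s : ℝ} {V : ∀ a, Matrix m (κ a) ℂ}

theorem IsTightFrame.isSemistable (hV : IsTightFrame c s V) (hc : ∀ a, 0 ≤ c a) :
    IsSemistable c s V := by
  intro k T hT
  have hle (a : ι) : (T * V a * (T * V a)ᴴ).trace.re ≤ (T * V a).rank := by
    rw [← rank_self_mul_conjTranspose]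
    refine trace_re_le_rank (isHermitian_mul_conjTranspose_self _) ?_
    have := conjTranspose_mul_mul_le (mul_conjTranspose_self_le_one (hV.isometry a)) Tᴴ
    simpa only [conjTranspose_conjTranspose, Matrix.mul_one, hT, conjTranspose_mul,
      Matrix.mul_assoc] using this
  have htrace : ∑ a, c a * (T * V a * (T * V a)ᴴ).trace.re = s * k := by
    have := congrArg (fun X => (T * X * Tᴴ).trace.re) hV.sum_eq
    simpa [Matrix.mul_sum, Matrix.sum_mul, trace_sum, hT, Matrix.mul_assoc] using this
  rw [← htrace]
  exact Finset.sum_le_sum fun a _ => mul_le_mul_of_nonneg_left (hle a) (hc a)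

theorem IsTightFrame.sum_mul_card (hV : IsTightFrame c s V) :
    ∑ a, c a * Fintype.card (κ a) = s * Fintype.card m := by
  have := congrArg (fun X => X.trace.re) hV.sum_eq
  simpa [trace_sum, trace_mul_comm (V _), hV.isometry] using this

end Frames

section Genericity

variable {ι m : Type*} {κ : ι → Type*}
  [∀ a, Fintype (κ a)] {K : Subfield ℂ} {z : ℂ} {A B : ∀ a, Matrix m (κ a) ℂ}

theorem isClosed_setOf_exists_rank_mul_le [Fintype m] {k : Type*} [Finite k] [DecidableEq k]
    (A B : ∀ a, Matrix m (κ a) ℂ) (ρ : ι → ℕ) :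
    IsClosed {w : ℂ | ∃ T : Matrix k m ℂ,
      T * Tᴴ = 1 ∧ ∀ a, (T * (A a + w • B a)).rank ≤ ρ a} := by
  have : CompactSpace {T : Matrix k m ℂ | T * Tᴴ = 1} :=
    isCompact_iff_compactSpace.1 isCompact_setOf_mul_conjTranspose_eq_one
  have hclosed : IsClosed {p : {T : Matrix k m ℂ | T * Tᴴ = 1} × ℂ |
      ∀ a, ((p.1 : Matrix k m ℂ) * (A a + p.2 • B a)).rank ≤ ρ a} := by
    rw [Set.ofPred_forall]
    exact isClosed_iInter fun a => (isClosed_setOf_matrix_rank_le (ρ a)).preimage (by fun_prop)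
  convert isClosedMap_snd_of_compactSpace _ hclosed using 1
  ext w
  simp

-- An automorphism `σ` carries the ranks at `z` to those at `σ z`; the inequality then extends to
-- the closure of the orbit of `z`, because `T'` ranges over a compact set.
theorem exists_rank_mul_le_of_dense_orbit [Fintype m]
    (hz : Dense (MulAction.orbit (ℂ ≃ₐ[K] ℂ) z))
    (hA : ∀ a i j, A a i j ∈ K) (hB : ∀ a i j, B a i j ∈ K) (z₀ : ℂ)
    {k : Type*} [Finite k] [DecidableEq k] {T : Matrix k m ℂ} (hT : T * Tᴴ = 1) :
    ∃ T' : Matrix k m ℂ, T' * T'ᴴ = 1 ∧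
      ∀ a, (T' * (A a + z₀ • B a)).rank ≤ (T * (A a + z • B a)).rank := by
  have := Fintype.ofFinite k
  have hclosed := isClosed_setOf_exists_rank_mul_le (k := k) A B
    fun a => (T * (A a + z • B a)).rank
  refine hclosed.closure_subset_iff.2 ?_ (hz z₀)
  rintro _ ⟨σ, rfl⟩
  let σ' : ℂ →+* ℂ := (σ : ℂ →+* ℂ)
  have hfix (M : ∀ a, Matrix m (κ a) ℂ) (hM : ∀ a i j, M a i j ∈ K) (a : ι) :
      (M a).map σ' = M a := by
    ext i j
    exact σ.commutes ⟨M a i j, hM a i j⟩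
  have hright : T.map σ' * Tᴴ.map σ' = 1 := by
    rw [← Matrix.map_mul, hT, Matrix.map_one _ (map_zero _) (map_one _)]
  obtain ⟨L, hL⟩ := exists_mul_conjTranspose_eq_one hright
  refine ⟨L * T.map σ', hL, fun a => ?_⟩
  have hpencil : A a + σ z • B a = (A a + z • B a).map σ' := by
    conv_lhs => rw [← hfix A hA a, ← hfix B hB a]
    ext i j
    simp [σ']
  calc (L * T.map σ' * (A a + σ z • B a)).rank
      = (L * (T * (A a + z • B a)).map σ').rank := by
        rw [hpencil, Matrix.map_mul, Matrix.mul_assoc]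
    _ ≤ ((T * (A a + z • B a)).map σ').rank := rank_mul_le_right _ _
    _ ≤ (T * (A a + z • B a)).rank := rank_map_ringHom_le _ _

theorem rank_le_rank_of_dense_orbit [Finite m] (hz : Dense (MulAction.orbit (ℂ ≃ₐ[K] ℂ) z))
    (hA : ∀ a i j, A a i j ∈ K) (hB : ∀ a i j, B a i j ∈ K) (z₀ : ℂ) (a : ι) :
    (A a + z₀ • B a).rank ≤ (A a + z • B a).rank := by
  classical
  have := Fintype.ofFinite m
  obtain ⟨T, hT, hle⟩ := exists_rank_mul_le_of_dense_orbit hz hA hB z₀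
    (T := (1 : Matrix m m ℂ)) (by simp)
  have hTdet : IsUnit T.det := isUnit_det_of_right_inverse hT
  simpa only [rank_mul_eq_right_of_isUnit_det T _ hTdet, Matrix.one_mul] using hle a

theorem IsSemistable.of_dense_orbit [Fintype ι] [Fintype m] {c : ι → ℝ} {s : ℝ} (hc : ∀ a, 0 ≤ c a)
    (hz : Dense (MulAction.orbit (ℂ ≃ₐ[K] ℂ) z)) (hA : ∀ a i j, A a i j ∈ K)
    (hB : ∀ a i j, B a i j ∈ K) {z₀ : ℂ} (h : IsSemistable c s fun a => A a + z₀ • B a) :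
    IsSemistable c s fun a => A a + z • B a := by
  intro k T hT
  obtain ⟨T', hT', hle⟩ := exists_rank_mul_le_of_dense_orbit hz hA hB z₀ hT
  exact (h k T' hT').trans <| Finset.sum_le_sum fun a _ =>
    mul_le_mul_of_nonneg_left (by exact_mod_cast hle a) (hc a)

end Genericity

section SuccessiveDifferences

variable {n : ℕ}

/-- The differences `f j - f (j + 1)`, with `f n` read as `0`. -/
def succDiff (f : Fin n → ℝ) (j : Fin n) : ℝ :=
  f j - if h : (j : ℕ) + 1 < n then f ⟨j + 1, h⟩ else 0

theorem succDiff_nonneg {f : Fin n → ℝ} (hf : Antitone f) {j : Fin n}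
    (hj : (j : ℕ) + 1 < n ∨ 0 ≤ f j) : 0 ≤ succDiff f j := by
  rw [succDiff, sub_nonneg]
  split_ifs with h
  · exact hf (Fin.le_def.2 (Nat.le_succ _))
  · exact hj.resolve_left h

theorem sum_Ici_succDiff (f : Fin n → ℝ) (i : Fin n) : ∑ j ∈ Finset.Ici i, succDiff f j = f i := by
  obtain _ | n := n
  · exact i.elim0
  induction i using Fin.reverseInduction with
  | last => simp [← Fin.top_eq_last, Finset.Ici_top, succDiff]
  | cast i ih =>
    have hIci : Finset.Ici i.castSucc = insert i.castSucc (Finset.Ici i.succ) := by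
      ext j
      simp only [Finset.mem_insert, Finset.mem_Ici, Fin.le_def, Fin.ext_iff, Fin.val_castSucc,
        Fin.val_succ]
      omega
    rw [hIci, Finset.sum_insert (by simp), ih]
    simp [succDiff, Fin.succ]

theorem sum_succDiff_smul_indicator (f : Fin n → ℝ) :
    ∑ j, succDiff f j • (Set.Iic j).indicator (1 : Fin n → ℝ) = f := by
  ext i
  simp [Set.indicator_apply, ← Finset.sum_filter, Finset.filter_le_eq_Ici, sum_Ici_succDiff]

theorem map_nonneg_of_antitone {L : (Fin n → ℝ) →ₗ[ℝ] ℝ}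
    (hL : ∀ j, 0 ≤ L ((Set.Iic j).indicator 1)) (hL1 : L 1 = 0) {f : Fin n → ℝ}
    (hf : Antitone f) : 0 ≤ L f := by
  rw [← sum_succDiff_smul_indicator f, map_sum]
  refine Finset.sum_nonneg fun j _ => ?_
  rw [map_smul, smul_eq_mul]
  by_cases hj : (j : ℕ) + 1 < n
  · exact mul_nonneg (succDiff_nonneg hf (.inl hj)) (hL j)
  · have hIic : Set.Iic j = Set.univ := Set.eq_univ_of_forall fun i => Fin.le_def.2 (by omega)
    rw [hIic, Set.indicator_univ, hL1, mul_zero]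

end SuccessiveDifferences

section Pivots

variable {α K E : Type*} [LinearOrder α] [Field K] [AddCommGroup E] [Module K E]

variable (K) in
/-- The indices of the vectors that are not in the span of the preceding ones, as selected by
Gaussian elimination. -/
def pivots (v : α → E) : Set α := {b | v b ∉ Submodule.span K (v '' Set.Iio b)}

theorem linearIndepOn_pivots (v : α → E) : LinearIndepOn K v (pivots K v) := by
  rw [linearIndepOn_iff_linearIndepOn_finset]
  intro t ht
  induction t using Finset.induction_on_max with
  | empty => simp
  | insert b t hb ih =>
    rw [Finset.coe_insert, Set.insert_subset_iff] at ht
    rw [Finset.coe_insert]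
    exact (ih ht.2).insert fun hmem =>
      ht.1 (Submodule.span_mono (Set.image_mono fun x hx => hb x hx) hmem)

theorem span_image_pivots_inter [WellFoundedLT α] (v : α → E) {s : Set α} (hs : IsLowerSet s) :
    Submodule.span K (v '' (pivots K v ∩ s)) = Submodule.span K (v '' s) := by
  refine le_antisymm (Submodule.span_mono (Set.image_mono Set.inter_subset_right))
    (Submodule.span_le.2 ?_)
  rintro _ ⟨b, hb, rfl⟩
  induction b using WellFoundedLT.induction with
  | _ b ih =>
    by_cases hpivot : b ∈ pivots K v
    · exact Submodule.subset_span ⟨b, ⟨hpivot, hb⟩, rfl⟩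
    · refine Submodule.span_le.2 ?_ (not_not.1 hpivot)
      rintro _ ⟨a, ha, rfl⟩
      exact ih a ha (hs ha.le hb)

theorem finrank_span_image_eq_ncard_pivots_inter [Finite α] (v : α → E) {s : Set α}
    (hs : IsLowerSet s) :
    Module.finrank K (Submodule.span K (v '' s)) = (pivots K v ∩ s).ncard := by
  have := Fintype.ofFinite α
  classical
  have hind := (linearIndepOn_pivots (K := K) v).mono (Set.inter_subset_left (t := s))
  rw [← span_image_pivots_inter v hs, Set.image_eq_range,
    finrank_span_eq_card hind.linearIndependent, Set.ncard_eq_toFinset_card', Set.toFinset_card]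

theorem exists_equiv_pivots [Finite α] {κ : Type*} [Fintype κ] [DecidableEq κ] {N : Matrix α κ K}
    (hN : Function.Injective N.mulVec) :
    ∃ e : κ ≃ pivots K N.row, IsUnit (N.submatrix (fun x => (e x : α)) id) := by
  have := Fintype.ofFinite α
  classical
  have hrank : N.rank = Fintype.card κ := by
    rw [Matrix.rank, LinearMap.finrank_range_of_inj hN, Module.finrank_fintype_fun_eq_card]
  have hcard : Fintype.card κ = Fintype.card (pivots K N.row) := by
    have := finrank_span_image_eq_ncard_pivots_inter (K := K) N.row isLowerSet_univ
    rw [Set.image_univ, ← rank_eq_finrank_span_row, hrank, Set.inter_univ] at this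
    rw [this, Set.ncard_eq_toFinset_card', Set.toFinset_card]
  let e := Fintype.equivOfCardEq hcard
  refine ⟨e, linearIndependent_rows_iff_isUnit.1 ?_⟩
  exact (linearIndepOn_pivots N.row).linearIndependent.comp e e.injective

theorem rank_submatrix_eq_ncard [Finite α] {κ k : Type*} [Fintype κ] [Finite k]
    {N : Matrix α κ K} (e : κ ≃ pivots K N.row) {f : k → α} (hf : IsLowerSet (Set.range f)) :
    (N.submatrix f id).rank = {x | (e x : α) ∈ Set.range f}.ncard := by
  have := Fintype.ofFinite k
  have hrows : Set.range (N.submatrix f id).row = N.row '' Set.range f := Set.range_comp N.row f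
  have hpivots : pivots K N.row ∩ Set.range f =
      (Subtype.val ∘ e) '' {x | (e x : α) ∈ Set.range f} := by
    ext b
    refine ⟨fun ⟨hb, hbf⟩ => ⟨e.symm ⟨b, hb⟩, by simpa using hbf, by simp⟩, ?_⟩
    rintro ⟨x, hx, rfl⟩
    exact ⟨(e x).2, hx⟩
  rw [rank_eq_finrank_span_row, hrows, finrank_span_image_eq_ncard_pivots_inter _ hf, hpivots,
    Set.ncard_image_of_injective _ (Subtype.val_injective.comp e.injective)]

end Pivots

section KempfNess

variable {ι : Type*} [Fintype ι] {κ : ι → Type*} [∀ a, Fintype (κ a)]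
  {c : ι → ℝ} {s : ℝ}

theorem IsSemistable.unitary_mul {m : Type*} [Fintype m] [DecidableEq m]
    {V : ∀ a, Matrix m (κ a) ℂ} (hV : IsSemistable c s V) {w : Matrix m m ℂ}
    (hw : w ∈ unitaryGroup m ℂ) : IsSemistable c s fun a => w * V a := by
  intro k T hT
  have hTw : T * w * (T * w)ᴴ = 1 := by
    have hww : w * wᴴ = 1 := mem_unitaryGroup_iff.1 hw
    rw [conjTranspose_mul, Matrix.mul_assoc, ← Matrix.mul_assoc w, hww, Matrix.one_mul, hT]
  simpa only [Matrix.mul_assoc] using hV k (T * w) hTw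

theorem IsSemistable.sum_le_sum_pivots {n : ℕ} {N : ∀ a, Matrix (Fin n) (κ a) ℂ}
    (hN : IsSemistable c s N) (hcard : ∑ a, c a * Fintype.card (κ a) = s * n)
    (e : ∀ a, κ a ≃ pivots ℂ (N a).row) {f : Fin n → ℝ} (hf : Antitone f) :
    s * ∑ i, f i ≤ ∑ a, c a * ∑ x, f (e a x) := by
  let L : (Fin n → ℝ) →ₗ[ℝ] ℝ :=
    ∑ a, c a • ∑ x, LinearMap.proj (e a x : Fin n) - s • ∑ i, LinearMap.proj i
  have hL (g : Fin n → ℝ) : L g = ∑ a, c a * ∑ x, g (e a x) - s * ∑ i, g i := by simp [L]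
  refine sub_nonneg.1 (hL f ▸ map_nonneg_of_antitone (fun j => ?_) ?_ hf)
  · let φ : Fin (j + 1) → Fin n := Fin.castLE j.2
    have hφ : Set.range φ = Set.Iic j := by
      ext i
      exact ⟨fun ⟨x, hx⟩ => hx ▸ Fin.le_def.2 (Nat.le_of_lt_succ x.2),
        fun hi => ⟨⟨i, Nat.lt_succ_of_le hi⟩, rfl⟩⟩
    let T : Matrix (Fin (j + 1)) (Fin n) ℂ := (1 : Matrix (Fin n) (Fin n) ℂ).submatrix φ id
    have hTN (a : ι) : T * N a = (N a).submatrix φ id := by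
      ext x y
      simp [T, mul_apply, one_apply]
    have hT : T * Tᴴ = 1 := by
      ext x y
      simp [T, mul_apply, one_apply, φ, eq_comm]
    have hrank (a : ι) : ((T * N a).rank : ℝ) =
        ∑ x, (Set.Iic j).indicator (1 : Fin n → ℝ) (e a x) := by
      rw [hTN, rank_submatrix_eq_ncard (e a) (hφ ▸ isLowerSet_Iic j), hφ,
        Set.ncard_eq_toFinset_card']
      simp [Set.indicator_apply]
    have hcardIic : ∑ i, (Set.Iic j).indicator (1 : Fin n → ℝ) i = (j + 1 : ℕ) := by
      simp [Set.indicator_apply, Finset.filter_ge_eq_Iic]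
    rw [hL, sub_nonneg, hcardIic]
    simpa only [hrank] using hN _ T hT
  · simp [hL, hcard]

variable [∀ a, DecidableEq (κ a)] {m : Type*} [Fintype m] [DecidableEq m]

/-- The Kempf–Ness functional of the column spaces of the `V a`, as a function of a positive
definite form `P` on `ℂ^m`. -/
noncomputable def kempfNess (c : ι → ℝ) (s : ℝ) (V : ∀ a, Matrix m (κ a) ℂ)
    (P : Matrix m m ℂ) : ℝ :=
  ∑ a, c a * logDet ((V a)ᴴ * P * V a) - s * logDet P

theorem kempfNess_conj {V : ∀ a, Matrix m (κ a) ℂ} (c : ι → ℝ) (s : ℝ) {w P : Matrix m m ℂ}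
    (hw : w ∈ unitaryGroup m ℂ) (hP : P.PosDef) :
    kempfNess c s V (wᴴ * P * w) = kempfNess c s (fun a => w * V a) P := by
  have hlog := logDet_unitary_conj hP (Unitary.star_mem hw)
  rw [star_eq_conjTranspose, conjTranspose_conjTranspose] at hlog
  rw [kempfNess, kempfNess, hlog]
  simp only [conjTranspose_mul, Matrix.mul_assoc]

theorem IsSemistable.eventually_le_kempfNess {n : ℕ} {V : ∀ a, Matrix (Fin n) (κ a) ℂ}
    (hV : IsSemistable c s V) (hc : ∀ a, 0 ≤ c a) (hinj : ∀ a, Function.Injective (V a).mulVec)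
    (hcard : ∑ a, c a * Fintype.card (κ a) = s * n) (w₀ : unitaryGroup (Fin n) ℂ) :
    ∃ C, ∀ᶠ w : unitaryGroup (Fin n) ℂ in 𝓝 w₀, ∀ d : Fin n → ℝ, Antitone d → (∀ i, 0 < d i) →
      C ≤ kempfNess c s (fun a => (w : Matrix (Fin n) (Fin n) ℂ) * V a)
        (diagonal fun i => (d i : ℂ)) := by
  have hinj₀ (a : ι) : Function.Injective ((w₀ : Matrix (Fin n) (Fin n) ℂ) * V a).mulVec := by
    have hcomp : ((w₀ : Matrix (Fin n) (Fin n) ℂ) * V a).mulVec =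
        (w₀ : Matrix (Fin n) (Fin n) ℂ).mulVec ∘ (V a).mulVec :=
      funext fun v => (mulVec_mulVec v _ _).symm
    exact hcomp ▸ (mulVec_injective_of_isUnit (Unitary.isUnit_coe (U := w₀))).comp (hinj a)
  choose e he using fun a => exists_equiv_pivots (hinj₀ a)
  let minor (a : ι) (w : unitaryGroup (Fin n) ℂ) : ℂ :=
    (((w : Matrix (Fin n) (Fin n) ℂ) * V a).submatrix (fun x => (e a x : Fin n)) id).det
  have hminor (a : ι) : Continuous (minor a) := by fun_prop
  have hminor₀ (a : ι) : minor a w₀ ≠ 0 := ((isUnit_iff_isUnit_det _).1 (he a)).ne_zero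
  let μ (w : unitaryGroup (Fin n) ℂ) : ℝ := ∑ a, c a * Real.log (Complex.normSq (minor a w))
  have hμ : ContinuousAt μ w₀ := by
    refine tendsto_finsetSum _ fun a _ => ContinuousAt.const_mul ?_ (c a)
    exact (Complex.continuous_normSq.comp (hminor a)).continuousAt.log (by simpa using hminor₀ a)
  refine ⟨μ w₀ - 1, ?_⟩
  filter_upwards [hμ.eventually_const_lt (sub_one_lt (μ w₀)),
    Filter.eventually_all.2 fun a => (hminor a).continuousAt.eventually_ne (hminor₀ a)]
    with w hw hw' d hd hd_pos
  have hcomb := (hV.unitary_mul w₀.2).sum_le_sum_pivots hcard e (f := fun i => Real.log (d i))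
    fun i j hij => Real.log_le_log (hd_pos j) (hd hij)
  have hbound (a : ι) := mul_le_mul_of_nonneg_left (log_normSq_minor_add_le_logDet hd_pos
    ((e a).toEmbedding.trans (Function.Embedding.subtype _))
    ((isUnit_iff_isUnit_det _).2 (hw' a).isUnit)) (hc a)
  have hsum := Finset.sum_le_sum fun a (_ : a ∈ Finset.univ) => hbound a
  simp only [mul_add, Finset.sum_add_distrib] at hsum
  rw [kempfNess, logDet_diagonal hd_pos]
  refine hw.le.trans (le_sub_iff_add_le.2 (le_trans ?_ hsum))
  exact add_le_add_right hcomb _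

theorem IsSemistable.exists_le_kempfNess {n : ℕ} {V : ∀ a, Matrix (Fin n) (κ a) ℂ}
    (hV : IsSemistable c s V) (hc : ∀ a, 0 ≤ c a) (hinj : ∀ a, Function.Injective (V a).mulVec)
    (hcard : ∑ a, c a * Fintype.card (κ a) = s * n) :
    ∃ C, ∀ P : Matrix (Fin n) (Fin n) ℂ, P.PosDef → C ≤ kempfNess c s V P := by
  obtain ⟨C, hC⟩ : ∃ C, ∀ w ∈ (Set.univ : Set (unitaryGroup (Fin n) ℂ)), ∀ d : Fin n → ℝ,
      Antitone d → (∀ i, 0 < d i) →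
      C ≤ kempfNess c s (fun a => (w : Matrix (Fin n) (Fin n) ℂ) * V a)
        (diagonal fun i => (d i : ℂ)) := by
    have := compactSpace_unitaryGroup (k := Fin n)
    refine isCompact_univ.induction_on ⟨0, by simp⟩ ?_ ?_ fun w₀ _ => ?_
    · rintro S S' hSS' ⟨C, hC⟩
      exact ⟨C, fun w hw => hC w (hSS' hw)⟩
    · rintro S S' ⟨C, hC⟩ ⟨C', hC'⟩
      refine ⟨min C C', fun w hw d hd hd_pos => ?_⟩
      exact hw.elim (fun hw => min_le_of_left_le (hC w hw d hd hd_pos))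
        fun hw => min_le_of_right_le (hC' w hw d hd hd_pos)
    · obtain ⟨C, hC⟩ := hV.eventually_le_kempfNess hc hinj hcard w₀
      exact ⟨_, mem_nhdsWithin_of_mem_nhds hC, C, fun w hw => hw⟩
  refine ⟨C, fun P hP => ?_⟩
  let σ := Tuple.sort fun i => -hP.1.eigenvalues i
  obtain ⟨U, hU, hPU⟩ := exists_unitary_conj_diagonal hP.1 σ
  have hd : Antitone fun i => hP.1.eigenvalues (σ i) := fun i j hij =>
    neg_le_neg_iff.1 (Tuple.monotone_sort (fun i => -hP.1.eigenvalues i) hij)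
  have hD : (diagonal fun i => (hP.1.eigenvalues (σ i) : ℂ)).PosDef :=
    .diagonal fun i => by simpa using hP.eigenvalues_pos (σ i)
  have hUH := Unitary.star_mem hU
  have := kempfNess_conj c s (V := V) hUH hD
  rw [star_eq_conjTranspose, conjTranspose_conjTranspose, ← hPU] at this
  rw [this]
  exact hC ⟨_, hUH⟩ trivial _ hd fun i => hP.eigenvalues_pos (σ i)

end KempfNess

section CriticalPoints

theorem posDef_conj_isometry {m k : Type*} [Fintype m] [Finite k] [DecidableEq k]
    {O : Matrix m k ℂ} (hO : Oᴴ * O = 1) {Q : Matrix m m ℂ} (hQ : Q.PosDef) :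
    (Oᴴ * Q * O).PosDef := by
  have := Fintype.ofFinite k
  refine hQ.conjTranspose_mul_mul_same fun v w hvw => ?_
  simpa [mulVec_mulVec, hO] using congrArg Oᴴ.mulVec hvw

theorem trace_unitary_conj_mul {m : Type*} [Fintype m] [DecidableEq m] {W : Matrix m m ℂ}
    (hW : Wᴴ * W = 1) (X Z : Matrix m m ℂ) :
    (W * X * Wᴴ * (W * Z * Wᴴ)).trace = (X * Z).trace := by
  have hprod : W * X * Wᴴ * (W * Z * Wᴴ) = W * (X * Z) * Wᴴ := by
    simp only [Matrix.mul_assoc, ← Matrix.mul_assoc Wᴴ, hW, Matrix.one_mul]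
  rw [hprod, trace_mul_cycle, hW, Matrix.one_mul]

theorem eq_of_forall_mul_log_le {y s : ℝ} (h : ∀ t, 0 < t → s * Real.log t ≤ y * (t - 1)) :
    y = s := by
  have hmin : IsLocalMin (fun t => y * (t - 1) - s * Real.log t) 1 := by
    filter_upwards [lt_mem_nhds one_pos] with t ht
    simpa using h t ht
  have hderiv : HasDerivAt (fun t => y * (t - 1) - s * Real.log t) (y * 1 - s * 1⁻¹) 1 :=
    (((hasDerivAt_id 1).sub_const 1).const_mul y).sub
      ((Real.hasDerivAt_log one_ne_zero).const_mul s)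
  linarith [hmin.hasDerivAt_eq_zero hderiv]

theorem eq_smul_one_of_forall_mul_logDet_le {m : Type*} [Fintype m] [DecidableEq m]
    {Y : Matrix m m ℂ} (hY : Y.IsHermitian) {s : ℝ}
    (h : ∀ Q : Matrix m m ℂ, Q.PosDef → s * logDet Q ≤ ((Q - 1) * Y).trace.re) :
    Y = (s : ℂ) • 1 := by
  obtain ⟨W, hW, y, hYW⟩ : ∃ W ∈ unitaryGroup m ℂ, ∃ y : m → ℝ,
      Y = W * diagonal (fun i => (y i : ℂ)) * Wᴴ := by
    obtain ⟨W, hW, hYW⟩ := exists_unitary_conj_diagonal hY (Equiv.refl _)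
    exact ⟨W, hW, _, hYW⟩
  have hWW : Wᴴ * W = 1 := mem_unitaryGroup_iff'.1 hW
  have hWW' : W * Wᴴ = 1 := mem_unitaryGroup_iff.1 hW
  have hy (k : m) : y k = s := eq_of_forall_mul_log_le fun t ht => by
    let d : m → ℝ := Function.update 1 k t
    have hd (i : m) : 0 < d i := by
      by_cases hi : i = k <;> simp [d, hi, ht]
    have hD : (diagonal fun i => (d i : ℂ)).PosDef := .diagonal fun i => by simpa using hd i
    have hQ : (W * (diagonal fun i => (d i : ℂ)) * Wᴴ).PosDef := by
      simpa using posDef_conj_isometry (by simpa using hWW') hD (O := Wᴴ)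
    have hlog : logDet (W * (diagonal fun i => (d i : ℂ)) * Wᴴ) = Real.log t := by
      rw [logDet_unitary_conj hD hW, logDet_diagonal hd, Finset.sum_eq_single k] <;>
        simp +contextual [d]
    have hsub : W * (diagonal fun i => (d i : ℂ)) * Wᴴ - 1 =
        W * (diagonal fun i => (d i : ℂ) - 1) * Wᴴ := by
      rw [← diagonal_sub, diagonal_one, Matrix.mul_sub, Matrix.sub_mul, Matrix.mul_one, hWW']
    have htrace : ((W * (diagonal fun i => (d i : ℂ)) * Wᴴ - 1) * Y).trace.re = y k * (t - 1) := by
      rw [hsub, hYW, trace_unitary_conj_mul hWW, diagonal_mul_diagonal, trace_diagonal,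
        Finset.sum_eq_single k] <;> simp +contextual [d, mul_comm]
    exact hlog ▸ htrace ▸ h _ hQ
  simp [hYW, hy, ← smul_one_eq_diagonal, hWW']

variable {ι m : Type*} [Fintype ι] [Fintype m] [DecidableEq m] {κ : ι → Type*}
  [∀ a, Fintype (κ a)] [∀ a, DecidableEq (κ a)] {c : ι → ℝ} {s : ℝ}

theorem kempfNess_le_trace {O : ∀ a, Matrix m (κ a) ℂ} (hO : ∀ a, (O a)ᴴ * O a = 1)
    (hc : ∀ a, 0 ≤ c a) {Q : Matrix m m ℂ} (hQ : Q.PosDef) :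
    kempfNess c s O Q ≤
      ((Q - 1) * ∑ a, (c a : ℂ) • (O a * (O a)ᴴ)).trace.re - s * logDet Q := by
  have htrace (a : ι) : ((O a)ᴴ * Q * O a).trace.re - Fintype.card (κ a) =
      ((Q - 1) * (O a * (O a)ᴴ)).trace.re := by
    rw [Matrix.sub_mul, trace_sub, Matrix.one_mul, trace_mul_comm (O a), hO, trace_one,
      Complex.sub_re, Complex.natCast_re, Matrix.mul_assoc, trace_mul_comm, Matrix.mul_assoc]
  have hsum : ((Q - 1) * ∑ a, (c a : ℂ) • (O a * (O a)ᴴ)).trace.re =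
      ∑ a, c a * (((O a)ᴴ * Q * O a).trace.re - Fintype.card (κ a)) := by
    simp only [htrace, Matrix.mul_sum, mul_smul_comm, trace_sum, trace_smul, Complex.re_sum,
      smul_eq_mul, Complex.re_ofReal_mul]
  rw [hsum]
  exact sub_le_sub_right (Finset.sum_le_sum fun a _ => mul_le_mul_of_nonneg_left
    (logDet_le_trace_sub_card (posDef_conj_isometry (hO a) hQ)) (hc a)) _

theorem isTightFrame_of_kempfNess_nonneg {O : ∀ a, Matrix m (κ a) ℂ}
    (hO : ∀ a, (O a)ᴴ * O a = 1) (hc : ∀ a, 0 ≤ c a)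
    (h : ∀ Q : Matrix m m ℂ, Q.PosDef → 0 ≤ kempfNess c s O Q) : IsTightFrame c s O where
  isometry := hO
  sum_eq := by
    refine eq_smul_one_of_forall_mul_logDet_le ?_ fun Q hQ =>
      sub_nonneg.1 ((h Q hQ).trans (kempfNess_le_trace hO hc hQ))
    simp [IsHermitian, conjTranspose_sum, conjTranspose_smul]

theorem kempfNess_eq_sub {V O : ∀ a, Matrix m (κ a) ℂ} {R : ∀ a, Matrix (κ a) (κ a) ℂ}
    {g Q : Matrix m m ℂ} (c : ι → ℝ) (s : ℝ) (hO : ∀ a, (O a)ᴴ * O a = 1)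
    (hR : ∀ a, IsUnit (R a)) (hg : IsUnit g) (hgV : ∀ a, g * V a = O a * R a) (hQ : Q.PosDef) :
    kempfNess c s O Q = kempfNess c s V (gᴴ * Q * g) - kempfNess c s V (gᴴ * g) := by
  have hfactor {X : Matrix m m ℂ} (hX : X.PosDef) (a : ι) :
      logDet ((V a)ᴴ * (gᴴ * X * g) * V a) =
        Real.log (Complex.normSq (R a).det) + logDet ((O a)ᴴ * X * O a) := by
    rw [← logDet_conjTranspose_mul_mul (posDef_conj_isometry (hO a) hX) (hR a)]
    congr 1
    calc (V a)ᴴ * (gᴴ * X * g) * V a = (g * V a)ᴴ * X * (g * V a) := by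
          simp only [conjTranspose_mul, Matrix.mul_assoc]
      _ = (R a)ᴴ * ((O a)ᴴ * X * O a) * R a := by
          simp only [hgV, conjTranspose_mul, Matrix.mul_assoc]
  have hone := hfactor PosDef.one
  simp only [Matrix.mul_one, hO, logDet_one, add_zero] at hone
  have hgg := logDet_conjTranspose_mul_mul PosDef.one hg
  rw [Matrix.mul_one, logDet_one, add_zero] at hgg
  simp only [kempfNess, hfactor hQ, hone, hgg, logDet_conjTranspose_mul_mul hQ hg, mul_add,
    Finset.sum_add_distrib]
  ring

theorem continuousAt_kempfNess {O : ∀ a, Matrix m (κ a) ℂ} (hO : ∀ a, (O a)ᴴ * O a = 1)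
    {Q : Matrix m m ℂ} (hQ : Q.PosDef) (c : ι → ℝ) (s : ℝ) :
    ContinuousAt (fun V : ∀ a, Matrix m (κ a) ℂ => kempfNess c s V Q) O := by
  refine (tendsto_finsetSum _ fun a _ => ContinuousAt.const_mul ?_ (c a)).sub_const _
  have hdet : Continuous fun V : ∀ a, Matrix m (κ a) ℂ => ((V a)ᴴ * Q * V a).det.re := by fun_prop
  exact hdet.continuousAt.log
    (Complex.pos_iff.1 (posDef_conj_isometry (hO a) hQ).det_pos).1.ne'

-- The infimum of the functional need not be attained on the noncompact cone of forms, so the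
-- minimizing sequence of forms is traded for a sequence of frames in the compact set `𝒦`.
theorem IsSemistable.exists_isTightFrame {n : ℕ} {V : ∀ a, Matrix (Fin n) (κ a) ℂ}
    (hV : IsSemistable c s V) (hc : ∀ a, 0 ≤ c a) (hinj : ∀ a, Function.Injective (V a).mulVec)
    (hcard : ∑ a, c a * Fintype.card (κ a) = s * n)
    {𝒦 : Set (∀ a, Matrix (Fin n) (κ a) ℂ)} (h𝒦 : IsCompact 𝒦)
    (hiso : ∀ O ∈ 𝒦, ∀ a, (O a)ᴴ * O a = 1)
    (hfactor : ∀ g : Matrix (Fin n) (Fin n) ℂ, IsUnit g →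
      ∃ O ∈ 𝒦, ∃ R : ∀ a, Matrix (κ a) (κ a) ℂ, ∀ a, IsUnit (R a) ∧ g * V a = O a * R a) :
    ∃ O ∈ 𝒦, IsTightFrame c s O := by
  obtain ⟨C, hC⟩ := hV.exists_le_kempfNess hc hinj hcard
  let values : Set ℝ := kempfNess c s V '' {P | P.PosDef}
  have hbdd : BddBelow values := ⟨C, by rintro _ ⟨P, hP, rfl⟩; exact hC P hP⟩
  have happrox (k : ℕ) : ∃ O ∈ 𝒦, ∀ Q : Matrix (Fin n) (Fin n) ℂ, Q.PosDef →
      -(1 / (k + 1 : ℝ)) ≤ kempfNess c s O Q := by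
    obtain ⟨_, ⟨P, hP, rfl⟩, hlt⟩ := Real.lt_sInf_add_pos (s := values)
      ⟨_, 1, PosDef.one, rfl⟩ (Nat.one_div_pos_of_nat (α := ℝ) (n := k))
    obtain ⟨g, hg, rfl⟩ := posDef_iff_exists_conjTranspose_mul_self.1 hP
    obtain ⟨O, hO, R, hR⟩ := hfactor g hg
    refine ⟨O, hO, fun Q hQ => ?_⟩
    rw [kempfNess_eq_sub c s (hiso O hO) (fun a => (hR a).1) hg (fun a => (hR a).2) hQ]
    have := csInf_le hbdd ⟨_, hQ.conjTranspose_mul_mul_same (mulVec_injective_of_isUnit hg), rfl⟩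
    linarith
  choose O hO hOQ using happrox
  have (a : ι) : FirstCountableTopology (Matrix (Fin n) (κ a) ℂ) :=
    inferInstanceAs (FirstCountableTopology (Fin n → κ a → ℂ))
  obtain ⟨O', hO', φ, hφ, hlim⟩ := h𝒦.tendsto_subseq hO
  refine ⟨O', hO', isTightFrame_of_kempfNess_nonneg (hiso O' hO') hc fun Q hQ => ?_⟩
  refine le_of_tendsto_of_tendsto' ?_
    ((continuousAt_kempfNess (hiso O' hO') hQ c s).tendsto.comp hlim) fun k => hOQ (φ k) Q hQ
  simpa using ((tendsto_one_div_add_atTop_nhds_zero_nat (𝕜 := ℝ)).comp hφ.tendsto_atTop).neg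

end CriticalPoints

section Flags

variable {ι : Type*} {n : ℕ}

/-- The complete flags in `ℂ^n` spanned by the initial columns of the matrices `U i`, indexed by
all pairs of a flag `i` and a last column `j`. -/
def flagFrame (U : ι → Matrix (Fin n) (Fin n) ℂ) (p : ι × Fin n) :
    Matrix (Fin n) {x // x ≤ p.2} ℂ :=
  (U p.1).submatrix id Subtype.val

theorem submatrix_mul_of_isUpperTriangular {α R : Type*} [Fintype α] [LinearOrder α] [Semiring R]
    {m : Type*} (U : Matrix m α R) {T : Matrix α α R} (hT : T.IsUpperTriangular) (j : α) :
    (U * T).submatrix id (Subtype.val : {x // x ≤ j} → α) =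
      U.submatrix id (Subtype.val : {x // x ≤ j} → α) * T.submatrix Subtype.val Subtype.val := by
  ext i ⟨x, hx⟩
  simp only [submatrix_apply, mul_apply, id]
  rw [← Fintype.sum_subtype_add_sum_subtype (· ≤ j)]
  refine (congrArg _ (Finset.sum_eq_zero fun y _ => ?_)).trans (add_zero _)
  rw [hT (hx.trans_lt (not_le.1 y.2)), mul_zero]

theorem isUnit_submatrix_of_isUpperTriangular {α R : Type*} [Fintype α] [LinearOrder α] [CommRing R]
    {T : Matrix α α R} (hT : T.IsUpperTriangular) (hT' : IsUnit T) (j : α) :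
    IsUnit (T.submatrix (Subtype.val : {x // x ≤ j} → α) (Subtype.val : {x // x ≤ j} → α)) := by
  have hTj : (T.submatrix (Subtype.val : {x // x ≤ j} → α)
      (Subtype.val : {x // x ≤ j} → α)).IsUpperTriangular := fun _ _ hxy => hT hxy
  rw [isUnit_iff_isUnit_det, det_of_isUpperTriangular hT, IsUnit.prod_univ_iff] at hT'
  rw [isUnit_iff_isUnit_det, det_of_isUpperTriangular hTj, IsUnit.prod_univ_iff]
  exact fun x => hT' x

theorem exists_mul_flagFrame_eq {M : ι → Matrix (Fin n) (Fin n) ℂ}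
    (hM : ∀ i, IsUnit (M i)) :
    ∃ W : ι → Matrix (Fin n) (Fin n) ℂ, (∀ i, W i ∈ unitaryGroup (Fin n) ℂ) ∧
      ∃ R : ∀ p : ι × Fin n, Matrix {x // x ≤ p.2} {x // x ≤ p.2} ℂ,
        ∀ p, IsUnit (R p) ∧ flagFrame M p = flagFrame W p * R p := by
  choose W hW T hT hWT using fun i => exists_unitary_mul_upper (M i)
  refine ⟨W, hW, fun p => (T p.1).submatrix Subtype.val Subtype.val,
    fun p => ⟨isUnit_submatrix_of_isUpperTriangular (hT p.1) ?_ p.2, ?_⟩⟩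
  · exact isUnit_of_mul_isUnit_right (hWT p.1 ▸ hM p.1)
  · rw [flagFrame, hWT]
    exact submatrix_mul_of_isUpperTriangular _ (hT p.1) p.2

theorem mul_flagFrame (g : Matrix (Fin n) (Fin n) ℂ) (M : ι → Matrix (Fin n) (Fin n) ℂ)
    (p : ι × Fin n) : g * flagFrame M p = flagFrame (fun i => g * M i) p := by
  ext
  simp [flagFrame, mul_apply]

theorem mulVec_flagFrame_injective {M : ι → Matrix (Fin n) (Fin n) ℂ} (hM : ∀ i, IsUnit (M i))
    (p : ι × Fin n) : Function.Injective (flagFrame M p).mulVec :=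
  mulVec_injective_iff.2 <| (mulVec_injective_iff.1 (mulVec_injective_of_isUnit (hM p.1))).comp _
    Subtype.val_injective

theorem conjTranspose_mul_flagFrame {U : ι → Matrix (Fin n) (Fin n) ℂ}
    (hU : ∀ i, U i ∈ unitaryGroup (Fin n) ℂ) (p : ι × Fin n) :
    (flagFrame U p)ᴴ * flagFrame U p = 1 := by
  have hUU : (U p.1)ᴴ * U p.1 = 1 := mem_unitaryGroup_iff'.1 (hU p.1)
  calc (flagFrame U p)ᴴ * flagFrame U p
      = ((U p.1)ᴴ * U p.1).submatrix Subtype.val Subtype.val := rfl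
    _ = 1 := by rw [hUU, submatrix_one _ Subtype.val_injective]

theorem IsSemistable.exists_isTightFrame_flagFrame [Fintype ι] {c : ι × Fin n → ℝ} {s : ℝ}
    {M : ι → Matrix (Fin n) (Fin n) ℂ} (h : IsSemistable c s (flagFrame M))
    (hc : ∀ p, 0 ≤ c p) (hM : ∀ i, IsUnit (M i))
    (hcard : ∑ p, c p * Fintype.card {x // x ≤ p.2} = s * n) :
    ∃ W : ι → Matrix (Fin n) (Fin n) ℂ, (∀ i, W i ∈ unitaryGroup (Fin n) ℂ) ∧
      IsTightFrame c s (flagFrame W) := by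
  have := compactSpace_unitaryGroup (k := Fin n)
  let flags (W : ι → unitaryGroup (Fin n) ℂ) : ∀ p : ι × Fin n, Matrix (Fin n) {x // x ≤ p.2} ℂ :=
    flagFrame fun i => W i
  have hflags : Continuous flags := by
    refine continuous_pi fun p => ?_
    exact (continuous_subtype_val.comp (continuous_apply p.1)).matrix_submatrix _ _
  have hfactor (g : Matrix (Fin n) (Fin n) ℂ) (hg : IsUnit g) : ∃ O ∈ Set.range flags,
      ∃ R : ∀ p : ι × Fin n, Matrix {x // x ≤ p.2} {x // x ≤ p.2} ℂ,
        ∀ p, IsUnit (R p) ∧ g * flagFrame M p = O p * R p := by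
    obtain ⟨W, hW, R, hR⟩ := exists_mul_flagFrame_eq fun i => hg.mul (hM i)
    exact ⟨_, ⟨fun i => ⟨W i, hW i⟩, rfl⟩, R,
      fun p => ⟨(hR p).1, (mul_flagFrame g M p).trans (hR p).2⟩⟩
  obtain ⟨_, ⟨W, rfl⟩, hW⟩ := h.exists_isTightFrame hc (mulVec_flagFrame_injective hM) hcard
    (isCompact_range hflags) (Set.forall_mem_range.2 fun W =>
      conjTranspose_mul_flagFrame fun i => (W i).2) hfactor
  exact ⟨_, fun i => (W i).2, hW⟩

theorem isUnit_of_card_le_rank {m K : Type*} [Fintype m] [DecidableEq m] [Field K]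
    {A : Matrix m m K} (hA : Fintype.card m ≤ A.rank) : IsUnit A := by
  rw [← mulVec_surjective_iff_isUnit, ← coe_mulVecLin, ← LinearMap.range_eq_top]
  refine Submodule.eq_top_of_finrank_eq ?_
  rw [Module.finrank_fintype_fun_eq_card]
  exact (rank_le_card_width A).antisymm hA

theorem countable_subfieldClosure {F : Type*} [DivisionRing F] {S : Set F} (hS : S.Countable) :
    Countable (Subfield.closure S) :=
  Cardinal.mk_le_aleph0_iff.1 <| (Subfield.cardinalMk_closure_le_max S).trans <|
    max_le (Cardinal.mk_le_aleph0_iff.2 hS.to_subtype) le_rfl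

-- The two given systems of flags are the members `0` and `1` of a pencil; its generic member
-- inherits semistability from both.
theorem IsTightFrame.exists_flagFrame_add [Fintype ι] {c c' : ι × Fin n → ℝ} {s s' : ℝ}
    {U U' : ι → Matrix (Fin n) (Fin n) ℂ} (hU : ∀ i, U i ∈ unitaryGroup (Fin n) ℂ)
    (h : IsTightFrame c s (flagFrame U)) (h' : IsTightFrame c' s' (flagFrame U'))
    (hc : ∀ p, 0 ≤ c p) (hc' : ∀ p, 0 ≤ c' p) :
    ∃ W : ι → Matrix (Fin n) (Fin n) ℂ, (∀ i, W i ∈ unitaryGroup (Fin n) ℂ) ∧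
      IsTightFrame (c + c') (s + s') (flagFrame W) := by
  let entries : Set ℂ := Set.range (fun p : ι × Fin n × Fin n => U p.1 p.2.1 p.2.2) ∪
    Set.range fun p : ι × Fin n × Fin n => U' p.1 p.2.1 p.2.2
  let K := Subfield.closure entries
  have hU_mem (i x y) : U i x y ∈ K := Subfield.subset_closure (.inl ⟨(i, x, y), rfl⟩)
  have hdiff_mem (i x y) : (U' - U) i x y ∈ K :=
    sub_mem (Subfield.subset_closure (.inr ⟨(i, x, y), rfl⟩)) (hU_mem i x y)
  have : Countable K :=
    countable_subfieldClosure ((Set.finite_range _).union (Set.finite_range _)).countable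
  obtain ⟨z, hz⟩ := exists_dense_orbit_algEquiv K
  have hM (i : ι) : IsUnit (U i + z • (U' - U) i) := by
    have hrank := rank_le_rank_of_dense_orbit hz hU_mem hdiff_mem 0 i
    rw [zero_smul, add_zero, rank_of_isUnit _ (Unitary.isUnit_coe (U := ⟨U i, hU i⟩))] at hrank
    exact isUnit_of_card_le_rank hrank
  have hfrom {z₀ : ℂ} {c : ι × Fin n → ℝ} {s : ℝ} (hc : ∀ p, 0 ≤ c p)
      (hz₀ : IsSemistable c s fun p => flagFrame U p + z₀ • flagFrame (U' - U) p) :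
      IsSemistable c s (flagFrame fun i => U i + z • (U' - U) i) :=
    hz₀.of_dense_orbit hc hz (fun p _ _ => hU_mem p.1 _ _) (fun p _ _ => hdiff_mem p.1 _ _)
  have hcard : ∑ p, (c + c') p * Fintype.card {x // x ≤ p.2} = (s + s') * n := by
    have hcard := h.sum_mul_card
    have hcard' := h'.sum_mul_card
    rw [Fintype.card_fin] at hcard hcard'
    simp only [Pi.add_apply, add_mul, Finset.sum_add_distrib, hcard, hcard']
  refine IsSemistable.exists_isTightFrame_flagFrame ?_ (fun p => add_nonneg (hc p) (hc' p)) hM hcard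
  refine (hfrom hc (z₀ := 0) ?_).add (hfrom hc' (z₀ := 1) ?_)
  · simpa using h.isSemistable hc
  · convert h'.isSemistable hc' using 2 with p
    ext
    simp [flagFrame]

end Flags

section HornCone

variable {ι : Type*} [Fintype ι]

/-- The families `lam` such that some Hermitian matrices with spectra `lam i` sum to zero. -/
def IsHornTuple {m : Type*} [Fintype m] [DecidableEq m] (lam : ι → m → ℝ) : Prop :=
  ∃ U : ι → Matrix m m ℂ, (∀ i, U i ∈ unitaryGroup m ℂ) ∧
    ∑ i, U i * diagonal (fun j => (lam i j : ℂ)) * (U i)ᴴ = 0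

theorem IsHornTuple.comp_equiv {m : Type*} [Fintype m] [DecidableEq m] {lam : ι → m → ℝ}
    (h : IsHornTuple lam) (σ : ι ≃ ι) : IsHornTuple (lam ∘ σ) := by
  obtain ⟨U, hU, hsum⟩ := h
  exact ⟨U ∘ σ, fun i => hU (σ i), (Equiv.sum_comp σ fun i =>
    U i * diagonal (fun j => (lam i j : ℂ)) * (U i)ᴴ).trans hsum⟩

theorem isHornTuple_zero {m : Type*} [Fintype m] [DecidableEq m] :
    IsHornTuple (0 : ι → m → ℝ) :=
  ⟨fun _ => 1, fun _ => one_mem _, by simp⟩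

theorem diagonal_ofReal_smul {m : Type*} [DecidableEq m] (t : ℝ) (f : m → ℝ) :
    diagonal (fun j => ((t • f) j : ℂ)) = t • diagonal fun j => (f j : ℂ) := by
  rw [← diagonal_smul]
  congr 1
  ext j
  simp

theorem IsHornTuple.smul {m : Type*} [Fintype m] [DecidableEq m] {lam : ι → m → ℝ}
    (h : IsHornTuple lam) (t : ℝ) : IsHornTuple (t • lam) := by
  obtain ⟨U, hU, hsum⟩ := h
  refine ⟨U, hU, ?_⟩
  simp only [Pi.smul_apply t lam, diagonal_ofReal_smul, Matrix.mul_smul, Matrix.smul_mul,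
    ← Finset.smul_sum, hsum, smul_zero]

variable {n : ℕ}

theorem succDiff_add (f g : Fin n → ℝ) : succDiff (f + g) = succDiff f + succDiff g := by
  ext j
  simp only [succDiff, Pi.add_apply]
  split_ifs <;> ring

theorem sum_succDiff_smul_flagFrame (U : ι → Matrix (Fin n) (Fin n) ℂ) (f : ι → Fin n → ℝ) :
    ∑ p : ι × Fin n, (succDiff (f p.1) p.2 : ℂ) • (flagFrame U p * (flagFrame U p)ᴴ) =
      ∑ i, U i * diagonal (fun j => (f i j : ℂ)) * (U i)ᴴ := by
  rw [Fintype.sum_prod_type]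
  refine Finset.sum_congr rfl fun i _ => ?_
  have hproj (j : Fin n) : flagFrame U (i, j) * (flagFrame U (i, j))ᴴ =
      U i * diagonal ((Set.Iic j).indicator 1) * (U i)ᴴ := by
    ext x y
    rw [mul_apply, mul_apply, ← Fintype.sum_subtype_add_sum_subtype (· ≤ j)]
    refine (add_eq_left.2 (Finset.sum_eq_zero fun z _ => ?_)).trans
      (Finset.sum_congr rfl fun z _ => ?_) |>.symm
    · rw [mul_diagonal, Set.indicator_of_notMem (by exact z.2), mul_zero, zero_mul]
    · rw [mul_diagonal, Set.indicator_of_mem (by exact z.2), Pi.one_apply, mul_one]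
      rfl
  have hdiag : diagonal (fun j => (f i j : ℂ)) =
      ∑ j, (succDiff (f i) j : ℂ) • diagonal ((Set.Iic j).indicator (1 : Fin n → ℂ)) := by
    have hf (x : Fin n) : (f i x : ℂ) =
        ∑ j, (succDiff (f i) j : ℂ) * (Set.Iic j).indicator (1 : Fin n → ℂ) x := by
      conv_lhs => rw [← sum_succDiff_smul_indicator (f i)]
      simp [Set.indicator_apply, apply_ite Complex.ofReal]
    ext x y
    rw [Matrix.sum_apply]
    rcases eq_or_ne x y with rfl | hxy
    · simp only [Matrix.smul_apply, diagonal_apply_eq, smul_eq_mul, hf]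
    · simp only [Matrix.smul_apply, diagonal_apply_ne _ hxy, smul_zero, Finset.sum_const_zero]
  simp only [hproj, hdiag, Matrix.mul_sum, Matrix.sum_mul, Matrix.mul_smul, Matrix.smul_mul]

theorem isHornTuple_iff_exists_isTightFrame {lam : ι → Fin n → ℝ} (b : ι → ℝ) :
    IsHornTuple lam ↔ ∃ U : ι → Matrix (Fin n) (Fin n) ℂ, (∀ i, U i ∈ unitaryGroup (Fin n) ℂ) ∧
      IsTightFrame (fun p => succDiff (fun j => lam p.1 j + b p.1) p.2) (∑ i, b i)
        (flagFrame U) := by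
  refine exists_congr fun U => and_congr_right fun hU => ?_
  have hshift (i : ι) : U i * diagonal (fun j => ((lam i j + b i : ℝ) : ℂ)) * (U i)ᴴ =
      U i * diagonal (fun j => (lam i j : ℂ)) * (U i)ᴴ + (b i : ℂ) • 1 := by
    have hUU : U i * (U i)ᴴ = 1 := mem_unitaryGroup_iff.1 (hU i)
    simp only [Complex.ofReal_add]
    rw [← diagonal_add, ← smul_one_eq_diagonal (b i : ℂ), Matrix.mul_add, Matrix.add_mul,
      Matrix.mul_smul, Matrix.mul_one, Matrix.smul_mul, hUU]
  have hsum : ∑ p : ι × Fin n, (succDiff (fun j => lam p.1 j + b p.1) p.2 : ℂ) •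
        (flagFrame U p * (flagFrame U p)ᴴ) =
      ∑ i, U i * diagonal (fun j => (lam i j : ℂ)) * (U i)ᴴ + ((∑ i, b i : ℝ) : ℂ) • 1 := by
    rw [sum_succDiff_smul_flagFrame U fun i j => lam i j + b i]
    simp only [hshift, Finset.sum_add_distrib, Complex.ofReal_sum, Finset.sum_smul]
  refine ⟨fun h => ⟨conjTranspose_mul_flagFrame hU, ?_⟩, fun h => ?_⟩
  · rw [hsum, h, zero_add]
  · exact left_eq_add.1 (h.sum_eq.symm.trans hsum |>.trans (add_comm _ _))

theorem IsHornTuple.add {lam mu : ι → Fin n → ℝ} (hlam : IsHornTuple lam) (hmu : IsHornTuple mu)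
    (hlam_anti : ∀ i, Antitone (lam i)) (hmu_anti : ∀ i, Antitone (mu i)) :
    IsHornTuple (lam + mu) := by
  have hb (nu : ι → Fin n → ℝ) : ∃ b : ι → ℝ, ∀ i j, 0 ≤ nu i j + b i :=
    ⟨fun i => ∑ j, |nu i j|, fun i j => by
      have := Finset.single_le_sum (fun k _ => abs_nonneg (nu i k)) (Finset.mem_univ j)
      linarith [neg_abs_le (nu i j)]⟩
  obtain ⟨b, hb_lam⟩ := hb lam
  obtain ⟨b', hb_mu⟩ := hb mu
  have hnonneg {nu : ι → Fin n → ℝ} {b : ι → ℝ} (hnu : ∀ i, Antitone (nu i))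
      (hb : ∀ i j, 0 ≤ nu i j + b i) (p : ι × Fin n) :
      0 ≤ succDiff (fun j => nu p.1 j + b p.1) p.2 :=
    succDiff_nonneg (fun x y hxy => by simpa using hnu p.1 hxy) (.inr (hb p.1 p.2))
  obtain ⟨U, hU, hU_tight⟩ := (isHornTuple_iff_exists_isTightFrame b).1 hlam
  obtain ⟨U', -, hU'_tight⟩ := (isHornTuple_iff_exists_isTightFrame b').1 hmu
  refine (isHornTuple_iff_exists_isTightFrame (b + b')).2 ?_
  obtain ⟨W, hW, hW_tight⟩ := hU_tight.exists_flagFrame_add hU hU'_tight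
    (hnonneg hlam_anti hb_lam) (hnonneg hmu_anti hb_mu)
  refine ⟨W, hW, ?_⟩
  convert hW_tight using 1
  · ext p
    refine (congrArg (succDiff · p.2) (funext fun j => ?_)).trans (congrFun (succDiff_add _ _) p.2)
    exact add_add_add_comm _ _ _ _
  · simp [Finset.sum_add_distrib]

-- Averaging over the translates of `w` makes all the spectra equal.
theorem IsHornTuple.of_smul_const [AddGroup ι] {w : ι → ℝ} (hw : ∀ i, 0 ≤ w i) {lam : Fin n → ℝ}
    (hlam : Antitone lam) (h : IsHornTuple fun i => w i • lam) :
    IsHornTuple fun _ : ι => (∑ i, w i) • lam := by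
  have hsum : IsHornTuple (∑ k, fun i => w (i + k) • lam) ∧
      ∀ i, Antitone ((∑ k, fun i => w (i + k) • lam) i) := by
    refine Finset.sum_induction _ (fun nu : ι → Fin n → ℝ => IsHornTuple nu ∧ ∀ i, Antitone (nu i))
      (fun nu nu' hnu hnu' => ⟨hnu.1.add hnu'.1 hnu.2 hnu'.2, fun i => (hnu.2 i).add (hnu'.2 i)⟩)
      ⟨isHornTuple_zero, fun _ => antitone_const⟩ fun k _ =>
        ⟨h.comp_equiv (Equiv.addRight k), fun i => hlam.const_smul (hw _)⟩
  convert hsum.1 using 1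
  ext i : 1
  simp only [Finset.sum_apply, ← Finset.sum_smul]
  rw [Equiv.sum_comp (Equiv.addLeft i) w |>.symm]
  rfl

end HornCone

section CoadjointOrbits

theorem mem_convexHull_range_iff {ι R E : Type*} [Fintype ι] [Field R] [LinearOrder R]
    [IsStrictOrderedRing R] [AddCommGroup E] [Module R E] {v : ι → E} {x : E} :
    x ∈ convexHull R (Set.range v) ↔ ∃ w ∈ stdSimplex R ι, ∑ i, w i • v i = x := by
  classical
  have hv : v = Fintype.linearCombination R v ∘ fun i => Pi.single i 1 := by
    ext i
    simp [Fintype.linearCombination_apply_single]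
  conv_lhs => rw [hv]
  rw [Set.range_comp, ← LinearMap.image_convexHull, convexHull_rangle_single_eq_stdSimplex]
  rfl

theorem exists_perm_forall_apply_eq {α β : Type*} [Fintype α] {f g : α → β}
    (h : Finset.univ.val.map f = Finset.univ.val.map g) :
    ∃ σ : Equiv.Perm α, ∀ a, f (σ a) = g a := by
  classical
  have hcard (b : β) : Fintype.card {a // g a = b} = Fintype.card {a // f a = b} := by
    simpa only [Multiset.count_map, ← Finset.filter_val, Finset.card_val, ← Fintype.card_subtype,
      eq_comm (a := b)] using (congrArg (Multiset.count b) h).symm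
  exact ⟨Equiv.ofFiberEquiv fun b => Fintype.equivOfCardEq (hcard b), Equiv.ofFiberEquiv_map _⟩

variable {n : ℕ} {lam : Fin n → ℝ}

theorem mem_coadjointOrbit_iff (h0 : ∑ i, lam i = 0) {A : Matrix (Fin n) (Fin n) ℂ} :
    A ∈ coadjointOrbit lam ↔
      ∃ U ∈ unitaryGroup (Fin n) ℂ, U * diagonal (fun i => (lam i : ℂ)) * Uᴴ = A := by
  constructor
  · rintro ⟨-, hA, σ, hσ⟩
    obtain ⟨U, hU, hAU⟩ := exists_unitary_conj_diagonal hA σ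
    exact ⟨U, hU, by simpa only [hσ] using hAU.symm⟩
  · rintro ⟨U, hU, rfl⟩
    have hUU : Uᴴ * U = 1 := mem_unitaryGroup_iff'.1 hU
    have hA : (U * diagonal (fun i => (lam i : ℂ)) * Uᴴ).IsHermitian :=
      isHermitian_mul_mul_conjTranspose U
        (isHermitian_diagonal_iff.2 fun i => Complex.conj_ofReal _)
    refine ⟨?_, hA, exists_perm_forall_apply_eq ?_⟩
    · rw [trace_mul_comm, ← Matrix.mul_assoc, hUU, Matrix.one_mul, trace_diagonal,
        ← Complex.ofReal_sum, h0, Complex.ofReal_zero]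
    · refine Multiset.map_injective Complex.ofReal_injective ?_
      rw [Multiset.map_map, Multiset.map_map]
      refine hA.roots_charpoly_eq_eigenvalues.symm.trans ?_
      rw [charpoly_mul_comm, ← Matrix.mul_assoc, hUU, Matrix.one_mul, charpoly_diagonal]
      rw [← Finset.prod_map_val, ← Function.comp_def (fun x => Polynomial.X - Polynomial.C x),
        ← Multiset.map_map, Polynomial.roots_multiset_prod_X_sub_C]
      rfl

theorem zero_mem_partialConvexHull_coadjointOrbit_iff {r : ℕ} [NeZero r] (hlam : Antitone lam)
    (h0 : ∑ i, lam i = 0) :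
    0 ∈ partialConvexHull r (coadjointOrbit lam) ↔ IsHornTuple fun _ : Fin r => lam := by
  simp only [partialConvexHull, mem_convexHull_range_iff, mem_coadjointOrbit_iff h0,
    Set.mem_ofPred_eq]
  constructor
  · rintro ⟨f, hf, w, ⟨hw, hw_sum⟩, hwf⟩
    choose U hU hUf using hf
    have hweighted : IsHornTuple fun i => w i • lam := by
      refine ⟨U, hU, ?_⟩
      rw [← hwf]
      refine Finset.sum_congr rfl fun i _ => ?_
      rw [← hUf, diagonal_ofReal_smul, Matrix.mul_smul, Matrix.smul_mul]
    simpa only [hw_sum, one_smul] using hweighted.of_smul_const hw hlam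
  · rintro ⟨U, hU, hsum⟩
    refine ⟨_, fun i => ⟨U i, hU i, rfl⟩, fun _ => (r : ℝ)⁻¹,
      ⟨fun _ => by positivity, by simp⟩, ?_⟩
    rw [← Finset.smul_sum, hsum, smul_zero]

end CoadjointOrbits

/-- The set `𝔄_r` of decreasing trace-free `λ ∈ ℝ^n` with `0 ∈ C_r(O_λ)` is a convex cone:
it contains `0`, is closed under addition, and under multiplication by nonnegative scalars. -/
theorem Ar_isConvexCone (n : ℕ) (hn : 2 ≤ n) (r : ℕ) (hr : 1 ≤ r) :
    (0 : Fin n → ℝ) ∈ {lam : Fin n → ℝ | Antitone lam ∧ ∑ i, lam i = 0 ∧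
        (0 : Matrix (Fin n) (Fin n) ℂ) ∈ partialConvexHull r (coadjointOrbit lam)} ∧
    (∀ lam mu : Fin n → ℝ,
      lam ∈ {lam : Fin n → ℝ | Antitone lam ∧ ∑ i, lam i = 0 ∧
        (0 : Matrix (Fin n) (Fin n) ℂ) ∈ partialConvexHull r (coadjointOrbit lam)} →
      mu ∈ {lam : Fin n → ℝ | Antitone lam ∧ ∑ i, lam i = 0 ∧
        (0 : Matrix (Fin n) (Fin n) ℂ) ∈ partialConvexHull r (coadjointOrbit lam)} →
      lam + mu ∈ {lam : Fin n → ℝ | Antitone lam ∧ ∑ i, lam i = 0 ∧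
        (0 : Matrix (Fin n) (Fin n) ℂ) ∈ partialConvexHull r (coadjointOrbit lam)}) ∧
    (∀ (c : ℝ), 0 ≤ c → ∀ lam : Fin n → ℝ,
      lam ∈ {lam : Fin n → ℝ | Antitone lam ∧ ∑ i, lam i = 0 ∧
        (0 : Matrix (Fin n) (Fin n) ℂ) ∈ partialConvexHull r (coadjointOrbit lam)} →
      c • lam ∈ {lam : Fin n → ℝ | Antitone lam ∧ ∑ i, lam i = 0 ∧
        (0 : Matrix (Fin n) (Fin n) ℂ) ∈ partialConvexHull r (coadjointOrbit lam)}) := by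
  have : NeZero r := ⟨Nat.one_le_iff_ne_zero.1 hr⟩
  have mem_iff (lam : Fin n → ℝ) : (Antitone lam ∧ ∑ i, lam i = 0 ∧
      (0 : Matrix (Fin n) (Fin n) ℂ) ∈ partialConvexHull r (coadjointOrbit lam)) ↔
      Antitone lam ∧ ∑ i, lam i = 0 ∧ IsHornTuple fun _ : Fin r => lam :=
    and_congr_right fun hlam => and_congr_right fun h0 =>
      zero_mem_partialConvexHull_coadjointOrbit_iff hlam h0
  simp only [mem_iff, Set.mem_ofPred_eq]
  refine ⟨⟨antitone_const, Finset.sum_const_zero, isHornTuple_zero⟩, ?_, ?_⟩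
  · rintro lam mu ⟨hlam, hlam0, hlam_horn⟩ ⟨hmu, hmu0, hmu_horn⟩
    refine ⟨hlam.add hmu, ?_, hlam_horn.add hmu_horn (fun _ => hlam) fun _ => hmu⟩
    simp only [Pi.add_apply, Finset.sum_add_distrib, hlam0, hmu0, add_zero]
  · rintro c hc lam ⟨hlam, hlam0, hlam_horn⟩
    refine ⟨hlam.const_smul hc, ?_, hlam_horn.smul c⟩
    simp only [Pi.smul_apply, ← Finset.smul_sum, hlam0, smul_zero]
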